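/- Let E be a homogeneous effect algebra. For every block B⁰ of the orthoalgebra E_S of sharp elements of E and for every block B of E such that B⁰ ⊆ B, one has B⁰ = C(B), the center of the effect algebra B. -/

import Mathlib

/-- An effect algebra: a partial commutative, associative operation `oplus`
(with definedness encoded via `Option`), constants `zero` and `one`,
unique orthosupplements, and `a ⊕ 1` defined only for `a = 0`. -/
structure EffectAlgebra (E : Type*) where
  oplus : E → E → Option E
  zero : E
  one : E
  comm : ∀ a b, oplus a b = oplus b a
  assoc : ∀ a b c ab abc, oplus a b = some ab → oplus ab c = some abc →
    ∃ bc, oplus b c = some bc ∧ oplus a bc = some abc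
  compl_exists : ∀ a, ∃ b, oplus a b = some one
  compl_unique : ∀ a b c, oplus a b = some one → oplus a c = some one → b = c
  add_one : ∀ a b, oplus a one = some b → a = zero

namespace EffectAlgebra

variable {E : Type*} (A : EffectAlgebra E)

/-- `a ⊥ b` : the sum `a ⊕ b` is defined. -/
def Perp (a b : E) : Prop := (A.oplus a b).isSome

/-- `a ≤ b` iff `b = a ⊕ c` for some `c`. -/
def le (a b : E) : Prop := ∃ c, A.oplus a c = some b

/-- The orthosupplement `a'`: the unique `b` with `a ⊕ b = 1`. -/
noncomputable def compl (a : E) : E :=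
  @Classical.epsilon E ⟨A.zero⟩ fun b => A.oplus a b = some A.one

/-- `a ⊖ b` : the unique `c` with `b ⊕ c = a` (defined when `b ≤ a`). -/
noncomputable def ominus (a b : E) : E :=
  @Classical.epsilon E ⟨A.zero⟩ fun c => A.oplus b c = some a

/-- Homogeneity. -/
def Homogeneous : Prop :=
  ∀ u v₁ v₂ s, A.oplus v₁ v₂ = some s → A.le u s → A.le u (A.compl s) →
    ∃ u₁ u₂, A.le u₁ v₁ ∧ A.le u₂ v₂ ∧ A.oplus u₁ u₂ = some u

/-- Riesz decomposition property. -/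
def RDP : Prop :=
  ∀ u v₁ v₂ s, A.oplus v₁ v₂ = some s → A.le u s →
    ∃ u₁ u₂, A.le u₁ v₁ ∧ A.le u₂ v₂ ∧ A.oplus u₁ u₂ = some u

/-- The sum `c₁ ⊕ … ⊕ cₙ` of a finite family (a list); `some s` iff the family
is orthogonal with sum `s`. -/
def sumList : List E → Option E
  | [] => some A.zero
  | x :: xs => (sumList xs).bind fun s => A.oplus x s

/-- The subfamily of `C` indexed by a set of indices `S ⊆ {1,…,n}`. -/
def pickList (C : List E) (S : Finset (Fin C.length)) : List E :=
  (S.sort (· ≤ ·)).map C.get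

/-- `C` is an orthogonal cover of `M`. -/
def IsCoverOf (C : List E) (M : Set E) : Prop :=
  (A.sumList C).isSome ∧
    ∀ a ∈ M, ∃ S : Finset (Fin C.length), A.sumList (pickList C S) = some a

/-- `M` is compatible with covers in `X`: every finite subset of `M` has an
orthogonal cover with range contained in `X`. -/
def CompatWithCoversIn (M X : Set E) : Prop :=
  ∀ F : Finset E, ↑F ⊆ M →
    ∃ C : List E, (∀ c ∈ C, c ∈ X) ∧ A.IsCoverOf C ↑F

/-- `M` is compatible (with covers in `E`). -/
def Compatible (M : Set E) : Prop := A.CompatWithCoversIn M Set.univ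

/-- `M` is internally compatible. -/
def InternallyCompatible (M : Set E) : Prop := A.CompatWithCoversIn M M

/-- `D` is a refinement of `C`: a partition `{P i}` of the index set of `D`
with `C i = ⊕_{j ∈ P i} D j`. -/
def IsRefinement (D C : List E) : Prop :=
  ∃ P : Fin C.length → Finset (Fin D.length),
    (∀ i j, i ≠ j → Disjoint (P i) (P j)) ∧
    (∀ k, ∃ i, k ∈ P i) ∧
    (∀ i, A.sumList (pickList D (P i)) = some (C.get i))

/-- One step of the closure construction `M ↦ M₁`. -/
def closureStep (M : Set E) : Set E :=
  {x | ∃ y ∈ M, A.le x y ∧ A.le x (A.compl y)} ∪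
  {z | ∃ y ∈ M, ∃ x, A.le x y ∧ A.le x (A.compl y) ∧ A.oplus x z = some y}

/-- The sets `Mₙ`. -/
def closureSeq (M : Set E) (n : ℕ) : Set E := (A.closureStep)^[n] M

/-- The closure `M̄ = ⋃ₙ Mₙ`. -/
def closure (M : Set E) : Set E := ⋃ n, A.closureSeq M n

/-- `B` is a sub-effect algebra of `E`. -/
def IsSubEA (B : Set E) : Prop :=
  A.one ∈ B ∧ ∀ a ∈ B, ∀ b ∈ B, A.le b a → A.ominus a b ∈ B

/-- The Riesz decomposition property for (the effect algebra on) a subset `B`. -/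
def RDPOn (B : Set E) : Prop :=
  ∀ u v₁ v₂ s, u ∈ B → v₁ ∈ B → v₂ ∈ B → A.oplus v₁ v₂ = some s → A.le u s →
    ∃ u₁ u₂, u₁ ∈ B ∧ u₂ ∈ B ∧ A.le u₁ v₁ ∧ A.le u₂ v₂ ∧ A.oplus u₁ u₂ = some u

/-- Homogeneity for (the effect algebra on) a subset `B`. -/
def HomogeneousOn (B : Set E) : Prop :=
  ∀ u v₁ v₂ s, u ∈ B → v₁ ∈ B → v₂ ∈ B → A.oplus v₁ v₂ = some s →
    A.le u s → A.le u (A.compl s) →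
    ∃ u₁ u₂, u₁ ∈ B ∧ u₂ ∈ B ∧ A.le u₁ v₁ ∧ A.le u₂ v₂ ∧ A.oplus u₁ u₂ = some u

/-- A block: a maximal sub-effect algebra satisfying the Riesz decomposition
property. -/
def IsBlock (B : Set E) : Prop :=
  A.IsSubEA B ∧ A.RDPOn B ∧
    ∀ B', A.IsSubEA B' → A.RDPOn B' → B ⊆ B' → B' = B

/-- A block of the sub-effect algebra on `F`: a maximal sub-effect algebra of
`F` satisfying the Riesz decomposition property. -/
def IsBlockIn (F B : Set E) : Prop :=
  B ⊆ F ∧ A.IsSubEA B ∧ A.RDPOn B ∧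
    ∀ B', B' ⊆ F → A.IsSubEA B' → A.RDPOn B' → B ⊆ B' → B' = B

/-- `a` is sharp: the infimum `a ∧ a'` exists and equals `0`, i.e. every common
lower bound of `a` and `a'` is `0`. -/
def Sharp (a : E) : Prop :=
  ∀ b, A.le b a → A.le b (A.compl a) → b = A.zero

/-- `a` is sharp in the sub-effect algebra on `F`. -/
def SharpIn (F : Set E) (a : E) : Prop :=
  a ∈ F ∧ ∀ b ∈ F, A.le b a → A.le b (A.compl a) → b = A.zero

/-- `a` is principal. -/
def Principal (a : E) : Prop :=
  ∀ x y s, A.le x a → A.le y a → A.oplus x y = some s → A.le s a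

/-- `a` is principal in the sub-effect algebra on `B`. -/
def PrincipalIn (B : Set E) (a : E) : Prop :=
  a ∈ B ∧ ∀ x ∈ B, ∀ y ∈ B, ∀ s, A.le x a → A.le y a →
    A.oplus x y = some s → A.le s a

/-- `a` is central: principal, and every `b` has a unique decomposition
`b = b₁ ⊕ b₂` with `b₁ ≤ a`, `b₂ ≤ a'`. -/
def Central (a : E) : Prop :=
  A.Principal a ∧ ∀ b, ∃! p : E × E,
    A.le p.1 a ∧ A.le p.2 (A.compl a) ∧ A.oplus p.1 p.2 = some b

/-- `a` is central in the sub-effect algebra on `B`. -/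
def CentralIn (B : Set E) (a : E) : Prop :=
  A.PrincipalIn B a ∧ ∀ b ∈ B, ∃! p : E × E,
    p.1 ∈ B ∧ p.2 ∈ B ∧ A.le p.1 a ∧ A.le p.2 (A.compl a) ∧
      A.oplus p.1 p.2 = some b

/-- The center `C(E)`. -/
def center : Set E := {a | A.Central a}

/-- The compatibility center `K(E)`: the intersection of all blocks. -/
def compatCenter : Set E := {x | ∀ B, A.IsBlock B → x ∈ B}

end EffectAlgebra

/-!
In a sub-effect algebra with the Riesz decomposition property, an element disjoint from one of two
orthogonal elements and below their sum is below the other one. Hence the central elements of a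
block `B` are precisely the elements that are sharp relative to `B`, and these form a sub-effect
algebra which again has the Riesz decomposition property. Every sharp element of `E` in `B` is sharp
relative to `B`, so by maximality of `B⁰` it remains to see that elements sharp relative to `B` are
sharp in `E`: a common lower bound of `a ∈ B` and `a'` must itself lie in `B`.

This is a closure property of blocks. Finite subsets of `B` have orthogonal covers consisting of
elements of `B`, and `B` lies in a maximal set `N` with the same property. Homogeneity lets one
split the members of a cover along any element `x ≤ y, y'` with `y ∈ N`, so `N` contains all such
`x` and `y ⊖ x`. Given this, if two subfamilies `S`, `W` of a cover satisfy `⊕ S ≤ ⊕ W`, then the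
members of `W` split along `⊕ S`: the common part cancels and the remainders are orthogonal.
Therefore `N` is a sub-effect algebra with the Riesz decomposition property, and the block `B ⊆ N`
equals `N`.
-/

namespace EffectAlgebra

/-! ### Refinements and splittings of finite families -/

section Families

open scoped Pointwise

variable {G : Type*} [AddCommMonoid G] {X F : Set G} {C C' D D' V W : Multiset G} {x : G}

/-- The set of sums of subfamilies of a finite family: an orthogonal family covers exactly the
subsets of its `subsums`. -/
def subsums (C : Multiset G) : Set G := {a | ∃ S ≤ C, S.sum = a}

theorem subsums_add (C D : Multiset G) : subsums (C + D) = subsums C + subsums D := by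
  classical
  ext a
  constructor
  · rintro ⟨S, hS, rfl⟩
    refine ⟨_, ⟨S ∩ C, Multiset.inter_le_right, rfl⟩, _,
      ⟨S - C, Multiset.sub_le_iff_le_add'.2 hS, rfl⟩, ?_⟩
    dsimp only
    rw [add_comm, ← Multiset.sum_add, Multiset.sub_add_inter]
  · rintro ⟨_, ⟨S, hS, rfl⟩, _, ⟨T, hT, rfl⟩, rfl⟩
    exact ⟨S + T, add_le_add hS hT, Multiset.sum_add S T⟩

/-- The family `D`, with members in `X`, refines `C`: it has the same sum and covers whatever `C`
covers. -/
structure RefinesIn (X : Set G) (D C : Multiset G) : Prop where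
  mem : ∀ d ∈ D, d ∈ X
  sum_eq : D.sum = C.sum
  subsums_subset : subsums C ⊆ subsums D

namespace RefinesIn

protected theorem refl (hC : ∀ c ∈ C, c ∈ X) : RefinesIn X C C := ⟨hC, rfl, subset_rfl⟩

protected theorem trans (h : RefinesIn X D C) (h' : RefinesIn X D' D) : RefinesIn X D' C :=
  ⟨h'.mem, h'.sum_eq.trans h.sum_eq, h.subsums_subset.trans h'.subsums_subset⟩

protected theorem add (h : RefinesIn X D C) (h' : RefinesIn X D' C') :
    RefinesIn X (D + D') (C + C') where
  mem d hd := (Multiset.mem_add.1 hd).elim (h.mem d) (h'.mem d)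
  sum_eq := by rw [Multiset.sum_add, Multiset.sum_add, h.sum_eq, h'.sum_eq]
  subsums_subset := by
    rw [subsums_add, subsums_add]
    exact Set.add_subset_add h.subsums_subset h'.subsums_subset

theorem pair {p q : G} (hp : p ∈ X) (hq : q ∈ X) : RefinesIn X ({p} + {q}) {p + q} where
  mem := by simp [hp, hq]
  sum_eq := by simp
  subsums_subset := by
    rintro _ ⟨S, hS, rfl⟩
    rcases Multiset.le_singleton.1 hS with rfl | rfl
    · exact ⟨0, Multiset.zero_le _, rfl⟩
    · exact ⟨{p} + {q}, le_rfl, by simp⟩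

theorem exists_of_finite (hF : F.Finite) (hC : ∀ c ∈ C, c ∈ X)
    (h : ∀ x ∈ F, ∀ D, RefinesIn X D C → ∃ D', RefinesIn X D' D ∧ x ∈ subsums D') :
    ∃ D, RefinesIn X D C ∧ F ⊆ subsums D := by
  induction F, hF using Set.Finite.induction_on with
  | empty => exact ⟨C, .refl hC, Set.empty_subset _⟩
  | insert _ _ ih =>
    rw [Set.forall_mem_insert] at h
    obtain ⟨D, hD, hFD⟩ := ih h.2
    obtain ⟨D', hD', hx⟩ := h.1 D hD
    exact ⟨D', hD.trans hD', Set.insert_subset hx (hFD.trans hD'.subsums_subset)⟩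

end RefinesIn

/-- Every member `c` of the family `W` is a sum `c = p + q` of elements of `X` in such a way that
the first summands add up to `x`. -/
def Splits (X : Set G) (x : G) (W : Multiset G) : Prop :=
  ∃ D : Multiset (G × G),
    W.Rel (fun c p => p.1 + p.2 = c ∧ p.1 ∈ X ∧ p.2 ∈ X) D ∧ (D.map Prod.fst).sum = x

namespace Splits

protected theorem zero (X : Set G) : Splits X 0 0 := ⟨0, .zero, rfl⟩

protected theorem cons {p q : G} (hp : p ∈ X) (hq : q ∈ X) (h : Splits X x W) :
    Splits X (p + x) ((p + q) ::ₘ W) := by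
  obtain ⟨D, hD, rfl⟩ := h
  exact ⟨(p, q) ::ₘ D, hD.cons ⟨rfl, hp, hq⟩, by rw [Multiset.map_cons, Multiset.sum_cons]⟩

protected theorem add {y : G} (h : Splits X x W) (h' : Splits X y V) :
    Splits X (x + y) (W + V) := by
  obtain ⟨D, hD, rfl⟩ := h
  obtain ⟨D', hD', rfl⟩ := h'
  exact ⟨D + D', hD.add hD', by rw [Multiset.map_add, Multiset.sum_add]⟩

theorem of_add (h : Splits X x (W + V)) : ∃ y z, Splits X y W ∧ Splits X z V ∧ y + z = x := by
  obtain ⟨_, hWV, rfl⟩ := h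
  obtain ⟨D, D', hD, hD', rfl⟩ := Multiset.rel_add_left.1 hWV
  exact ⟨_, _, ⟨D, hD, rfl⟩, ⟨D', hD', rfl⟩, by rw [Multiset.map_add, Multiset.sum_add]⟩

theorem sum_self (h0 : 0 ∈ X) (hW : ∀ c ∈ W, c ∈ X) : Splits X W.sum W := by
  induction W using Multiset.induction_on with
  | empty => exact .zero X
  | cons c W ih =>
    rw [Multiset.forall_mem_cons] at hW
    simpa only [Multiset.sum_cons, add_zero] using (ih hW.2).cons hW.1 h0

theorem exists_refinesIn (h : Splits X x W) :
    ∃ P Q : Multiset G, RefinesIn X (P + Q) W ∧ P.sum = x := by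
  obtain ⟨D, hD, rfl⟩ := h
  refine ⟨D.map Prod.fst, D.map Prod.snd, ?_, rfl⟩
  induction hD with
  | zero => exact .refl (by simp)
  | @cons c p W D hp _ ih =>
    obtain ⟨rfl, hp₁, hp₂⟩ := hp
    have hcons := (RefinesIn.pair hp₁ hp₂).add ih
    rw [add_add_add_comm] at hcons
    simpa only [Multiset.map_cons, Multiset.singleton_add] using hcons

end Splits

end Families

variable {E : Type*} {A : EffectAlgebra E}

theorem oplus_zero (a : E) : A.oplus a A.zero = some a := by
  have one_oplus_zero : A.oplus A.one A.zero = some A.one := by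
    obtain ⟨b, hb⟩ := A.compl_exists A.one
    rwa [A.add_one b A.one (by rwa [A.comm])] at hb
  obtain ⟨b, hb⟩ := A.compl_exists a
  rw [A.comm] at hb
  obtain ⟨c, hac, hbc⟩ := A.assoc b a A.zero _ _ hb one_oplus_zero
  rw [hac, A.compl_unique b c a hbc hb]

/-- The totalization of an effect algebra: a top element `⊤`, absorbing for addition, is the value
of every undefined sum. Thus `a ⊥ b` reads `(a + b : A.Total) ≠ ⊤`, and the partial operation
becomes the addition of a canonically ordered commutative monoid. -/
def Total (_ : EffectAlgebra E) : Type _ := WithTop E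

namespace Total

/-- The inclusion of an effect algebra into its totalization. -/
@[coe] def of (a : E) : A.Total := WithTop.some a

instance : Coe E A.Total := ⟨of⟩

instance : Top A.Total := ⟨(⊤ : WithTop E)⟩

instance : Zero A.Total := ⟨of A.zero⟩

instance : One A.Total := ⟨of A.one⟩

instance : Add A.Total := ⟨fun x y => Option.bind x fun a => Option.bind y (A.oplus a)⟩

theorem coe_inj {a b : E} : (a : A.Total) = b ↔ a = b := WithTop.coe_inj

theorem coe_ne_top (a : E) : (a : A.Total) ≠ ⊤ := WithTop.coe_ne_top

theorem ne_top_iff {x : A.Total} : x ≠ ⊤ ↔ ∃ a : E, (a : A.Total) = x := WithTop.ne_top_iff_exists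

theorem coe_add_coe {a b c : E} : (a + b : A.Total) = c ↔ A.oplus a b = some c := Iff.rfl

theorem top_add (x : A.Total) : ⊤ + x = ⊤ := rfl

protected theorem add_comm (x y : A.Total) : x + y = y + x := by
  cases x using WithTop.recTopCoe <;> cases y using WithTop.recTopCoe
  · rfl
  · rfl
  · rfl
  · exact A.comm _ _

theorem add_top (x : A.Total) : x + ⊤ = ⊤ := Total.add_comm x ⊤

theorem left_ne_top {x y : A.Total} (h : x + y ≠ ⊤) : x ≠ ⊤ := by
  rintro rfl
  exact h (top_add y)

theorem right_ne_top {x y : A.Total} (h : x + y ≠ ⊤) : y ≠ ⊤ := by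
  rintro rfl
  exact h (add_top x)

theorem add_assoc_of_ne_top {x y z : A.Total} (h : x + y + z ≠ ⊤) :
    x + y + z = x + (y + z) := by
  obtain ⟨xyz, hxyz⟩ := ne_top_iff.1 h
  obtain ⟨xy, hxy⟩ := ne_top_iff.1 (left_ne_top h)
  obtain ⟨c, rfl⟩ := ne_top_iff.1 (right_ne_top h)
  obtain ⟨a, rfl⟩ := ne_top_iff.1 (left_ne_top (left_ne_top h))
  obtain ⟨b, rfl⟩ := ne_top_iff.1 (right_ne_top (left_ne_top h))
  obtain ⟨bc, hbc, habc⟩ :=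
    A.assoc a b c xy xyz (coe_add_coe.1 hxy.symm) (coe_add_coe.1 (by rw [hxy, hxyz]))
  rw [← hxyz, coe_add_coe.2 hbc, coe_add_coe.2 habc]

protected theorem add_assoc (x y z : A.Total) : x + y + z = x + (y + z) := by
  by_cases h : x + y + z = ⊤
  · by_contra hne
    have h' : z + y + x ≠ ⊤ := by
      rw [Total.add_comm _ x, Total.add_comm z]
      exact fun e => hne (h.trans e.symm)
    have hassoc := add_assoc_of_ne_top h'
    rw [Total.add_comm (z + y) x, Total.add_comm z y, Total.add_comm z (y + x),
      Total.add_comm y x] at hassoc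
    exact hne hassoc.symm
  · exact add_assoc_of_ne_top h

protected theorem add_zero (x : A.Total) : x + 0 = x := by
  cases x using WithTop.recTopCoe
  · rfl
  · exact oplus_zero _

instance : AddCommMonoid A.Total where
  add_assoc := Total.add_assoc
  add_comm := Total.add_comm
  add_zero := Total.add_zero
  zero_add x := (Total.add_comm 0 x).trans (Total.add_zero x)
  nsmul := nsmulRec

theorem one_ne_top : (1 : A.Total) ≠ ⊤ := coe_ne_top A.one

theorem exists_add_eq_one {x : A.Total} (hx : x ≠ ⊤) : ∃ y, x + y = 1 := by
  obtain ⟨a, rfl⟩ := ne_top_iff.1 hx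
  obtain ⟨b, hb⟩ := A.compl_exists a
  exact ⟨b, coe_add_coe.2 hb⟩

theorem eq_zero_of_add_one_ne_top {x : A.Total} (h : x + 1 ≠ ⊤) : x = 0 := by
  obtain ⟨a, rfl⟩ := ne_top_iff.1 (left_ne_top h)
  obtain ⟨b, hb⟩ := ne_top_iff.1 h
  exact coe_inj.2 (A.add_one a b (coe_add_coe.1 hb.symm))

theorem add_left_cancel {x y z : A.Total} (h : x + y = x + z) (hne : x + y ≠ ⊤) : y = z := by
  obtain ⟨c, hc⟩ := exists_add_eq_one hne
  have hy : x + c + y = 1 := by rw [← hc]; abel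
  have hz : x + c + z = 1 := by rw [← hc, h]; abel
  obtain ⟨a, ha⟩ := ne_top_iff.1 (left_ne_top (hy ▸ one_ne_top))
  obtain ⟨b, rfl⟩ := ne_top_iff.1 (right_ne_top (hy ▸ one_ne_top))
  obtain ⟨d, rfl⟩ := ne_top_iff.1 (right_ne_top (hz ▸ one_ne_top))
  rw [← ha] at hy hz
  exact coe_inj.2 (A.compl_unique a b d (coe_add_coe.1 hy) (coe_add_coe.1 hz))

theorem eq_zero_of_add_eq_zero {x y : A.Total} (h : x + y = 0) : x = 0 := by
  refine eq_zero_of_add_one_ne_top (left_ne_top (y := y) ?_)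
  rw [add_right_comm, h, zero_add]
  exact one_ne_top

instance : PartialOrder A.Total where
  le x y := ∃ z, x + z = y
  le_refl x := ⟨0, add_zero x⟩
  le_trans := by
    rintro x _ _ ⟨y, rfl⟩ ⟨z, rfl⟩
    exact ⟨y + z, (add_assoc x y z).symm⟩
  le_antisymm := by
    rintro x _ ⟨w, rfl⟩ ⟨v, hv⟩
    by_cases hx : x = ⊤
    · rw [hx, top_add]
    · have hwv : w + v = 0 :=
        add_left_cancel (x := x) (by rw [← add_assoc, hv, add_zero]) (by rwa [← add_assoc, hv])
      rw [eq_zero_of_add_eq_zero hwv, add_zero]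

instance : CanonicallyOrderedAdd A.Total where
  exists_add_of_le := fun ⟨z, hz⟩ => ⟨z, hz.symm⟩
  le_add_self x y := ⟨y, add_comm x y⟩
  le_self_add _ y := ⟨y, rfl⟩

instance : IsOrderedAddMonoid A.Total where
  add_le_add_left := by
    rintro x _ ⟨w, rfl⟩ z
    exact ⟨w, add_right_comm x z w⟩

instance : OrderTop A.Total where
  le_top x := ⟨⊤, add_top x⟩

theorem le_one {x : A.Total} (hx : x ≠ ⊤) : x ≤ 1 := exists_add_eq_one hx

theorem le_of_add_le_add_left {x y z : A.Total} (h : x + y ≤ x + z) (hne : x + z ≠ ⊤) : y ≤ z := by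
  obtain ⟨w, hw⟩ := exists_add_of_le h
  rw [add_assoc] at hw
  exact ⟨w, (add_left_cancel hw hne).symm⟩

theorem coe_le_coe {a b : E} : (a : A.Total) ≤ b ↔ A.le a b := by
  constructor
  · rintro ⟨z, hz⟩
    obtain ⟨c, rfl⟩ := ne_top_iff.1 (right_ne_top (hz ▸ coe_ne_top b))
    exact ⟨c, coe_add_coe.1 hz⟩
  · rintro ⟨c, hc⟩
    exact ⟨c, coe_add_coe.2 hc⟩

theorem coe_add_compl (a : E) : (a + A.compl a : A.Total) = 1 :=
  coe_add_coe.2 (Classical.epsilon_spec (A.compl_exists a))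

theorem coe_add_ominus {a b : E} (h : A.le b a) : (b + A.ominus a b : A.Total) = a :=
  coe_add_coe.2 (Classical.epsilon_spec h)

theorem le_compl_iff {a : E} {x : A.Total} : x ≤ A.compl a ↔ a + x ≠ ⊤ := by
  constructor
  · intro h
    refine ne_top_of_le_ne_top one_ne_top (b := (1 : A.Total)) ?_
    rw [← coe_add_compl a]
    gcongr
  · intro h
    refine le_of_add_le_add_left (x := (a : A.Total)) ?_ ?_
    · rw [coe_add_compl]
      exact le_one h
    · rw [coe_add_compl]
      exact one_ne_top

end Total

open Total

theorem Homogeneous.exists_add_eq (hA : A.Homogeneous) {u v₁ v₂ : A.Total} (hle : u ≤ v₁ + v₂)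
    (hne : v₁ + v₂ + u ≠ ⊤) : ∃ u₁ ≤ v₁, ∃ u₂ ≤ v₂, u₁ + u₂ = u := by
  obtain ⟨c, rfl⟩ := ne_top_iff.1 (right_ne_top hne)
  obtain ⟨s, hs⟩ := ne_top_iff.1 (left_ne_top hne)
  obtain ⟨a, rfl⟩ := ne_top_iff.1 (left_ne_top (left_ne_top hne))
  obtain ⟨b, rfl⟩ := ne_top_iff.1 (right_ne_top (left_ne_top hne))
  rw [← hs] at hle hne
  obtain ⟨u₁, u₂, h₁, h₂, hu⟩ := hA c a b s (coe_add_coe.1 hs.symm) (coe_le_coe.1 hle)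
    (coe_le_coe.1 (le_compl_iff.2 hne))
  exact ⟨u₁, coe_le_coe.2 h₁, u₂, coe_le_coe.2 h₂, coe_add_coe.2 hu⟩

/-! ### Sub-effect algebras in the totalization -/

variable {B M N X : Set E} {u v₁ v₂ w x y z : A.Total}

variable (A) in
/-- A subset of an effect algebra viewed as a set of elements of the totalization. -/
def lift (B : Set E) : Set A.Total := (↑) '' B

theorem coe_mem_lift {a : E} : (a : A.Total) ∈ A.lift B ↔ a ∈ B :=
  Function.Injective.mem_set_image fun _ _ => coe_inj.1

theorem ne_top_of_mem_lift (hx : x ∈ A.lift B) : x ≠ ⊤ := by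
  obtain ⟨a, -, rfl⟩ := hx
  exact coe_ne_top a

theorem lift_mono (h : M ⊆ N) : A.lift M ⊆ A.lift N := Set.image_mono h

theorem isSubEA_iff : A.IsSubEA B ↔
    1 ∈ A.lift B ∧ ∀ x y, x ∈ A.lift B → x + y ∈ A.lift B → y ∈ A.lift B := by
  refine and_congr coe_mem_lift.symm ⟨?_, fun h a ha b hb hle => ?_⟩
  · rintro h _ y ⟨b, hb, rfl⟩ ⟨a, ha, hby⟩
    have hle : A.le b a := coe_le_coe.1 ⟨y, hby.symm⟩
    have hy : A.ominus a b = y :=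
      add_left_cancel (x := b) ((coe_add_ominus hle).trans hby)
        (by rw [coe_add_ominus hle]; exact coe_ne_top a)
    exact hy ▸ coe_mem_lift.2 (h a ha b hb hle)
  · refine coe_mem_lift.1 (h b _ (coe_mem_lift.2 hb) ?_)
    rw [coe_add_ominus hle]
    exact coe_mem_lift.2 ha

namespace IsSubEA

theorem one_mem (hB : A.IsSubEA B) : 1 ∈ A.lift B := (isSubEA_iff.1 hB).1

theorem right_mem (hB : A.IsSubEA B) (hx : x ∈ A.lift B) (hxy : x + y ∈ A.lift B) :
    y ∈ A.lift B :=
  (isSubEA_iff.1 hB).2 x y hx hxy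

theorem zero_mem (hB : A.IsSubEA B) : 0 ∈ A.lift B :=
  hB.right_mem hB.one_mem (by rw [add_zero]; exact hB.one_mem)

theorem compl_mem (hB : A.IsSubEA B) (hx : x ∈ A.lift B) (hxy : x + y = 1) : y ∈ A.lift B :=
  hB.right_mem hx (hxy ▸ hB.one_mem)

theorem add_mem (hB : A.IsSubEA B) (hx : x ∈ A.lift B) (hy : y ∈ A.lift B) (hne : x + y ≠ ⊤) :
    x + y ∈ A.lift B := by
  obtain ⟨c, hc⟩ := exists_add_eq_one hne
  have hcB : c ∈ A.lift B := hB.right_mem hy (hB.compl_mem hx (by rwa [← add_assoc]))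
  exact hB.compl_mem hcB (by rwa [add_comm])

theorem multiset_sum_mem (hB : A.IsSubEA B) {C : Multiset A.Total} (hC : ∀ c ∈ C, c ∈ A.lift B)
    (hne : C.sum ≠ ⊤) : C.sum ∈ A.lift B := by
  induction C using Multiset.induction_on with
  | empty => exact hB.zero_mem
  | cons c C ih =>
    rw [Multiset.forall_mem_cons] at hC
    rw [Multiset.sum_cons] at hne ⊢
    exact hB.add_mem hC.1 (ih hC.2 (right_ne_top hne)) hne

end IsSubEA

theorem rdpOn_iff : A.RDPOn B ↔ ∀ u v₁ v₂, u ∈ A.lift B → v₁ ∈ A.lift B → v₂ ∈ A.lift B →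
    u ≤ v₁ + v₂ → v₁ + v₂ ≠ ⊤ →
    ∃ u₁ ∈ A.lift B, ∃ u₂ ∈ A.lift B, u₁ ≤ v₁ ∧ u₂ ≤ v₂ ∧ u₁ + u₂ = u := by
  constructor
  · rintro hR _ _ _ ⟨c, hc, rfl⟩ ⟨a, ha, rfl⟩ ⟨b, hb, rfl⟩ hle hne
    obtain ⟨s, hs⟩ := ne_top_iff.1 hne
    obtain ⟨u₁, u₂, hu₁, hu₂, h₁, h₂, hu⟩ := hR c a b s hc ha hb (coe_add_coe.1 hs.symm)
      (coe_le_coe.1 (hs ▸ hle))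
    exact ⟨u₁, coe_mem_lift.2 hu₁, u₂, coe_mem_lift.2 hu₂, coe_le_coe.2 h₁, coe_le_coe.2 h₂,
      coe_add_coe.2 hu⟩
  · intro h c a b s hc ha hb hs hle
    have hs' : (a + b : A.Total) = s := coe_add_coe.2 hs
    obtain ⟨_, ⟨u₁, hu₁, rfl⟩, _, ⟨u₂, hu₂, rfl⟩, h₁, h₂, hu⟩ :=
      h c a b (coe_mem_lift.2 hc) (coe_mem_lift.2 ha) (coe_mem_lift.2 hb)
        (hs' ▸ coe_le_coe.2 hle) (hs' ▸ coe_ne_top s)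
    exact ⟨u₁, u₂, hu₁, hu₂, coe_le_coe.1 h₁, coe_le_coe.1 h₂, coe_add_coe.1 hu⟩

/-! ### Sharp and central elements of a sub-effect algebra with the Riesz decomposition property -/

/-- `x` and `y` have no common lower bound in `X` other than `0`. -/
def DisjointIn (X : Set A.Total) (x y : A.Total) : Prop := ∀ t ∈ X, t ≤ x → t ≤ y → t = 0

theorem DisjointIn.symm {X : Set A.Total} (h : DisjointIn X x y) : DisjointIn X y x :=
  fun t ht hty htx => h t ht htx hty

theorem DisjointIn.mono {X : Set A.Total} (h : DisjointIn X x y) (hu : u ≤ x) (hw : w ≤ y) :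
    DisjointIn X u w :=
  fun t ht htu htw => h t ht (htu.trans hu) (htw.trans hw)

theorem mem_lift_sharpIn_iff (hxy : x + y = 1) :
    x ∈ A.lift {a | A.SharpIn B a} ↔ x ∈ A.lift B ∧ DisjointIn (A.lift B) x y := by
  obtain ⟨a, rfl⟩ := ne_top_iff.1 (left_ne_top (hxy ▸ one_ne_top))
  obtain rfl : A.compl a = y :=
    add_left_cancel ((coe_add_compl a).trans hxy.symm) (coe_add_compl a ▸ one_ne_top)
  rw [coe_mem_lift, coe_mem_lift]
  refine and_congr_right fun _ => ⟨?_, fun h b hb hba hba' => ?_⟩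
  · rintro h _ ⟨b, hb, rfl⟩ hba hba'
    exact coe_inj.2 (h b hb (coe_le_coe.1 hba) (coe_le_coe.1 hba'))
  · exact coe_inj.1 (h b (coe_mem_lift.2 hb) (coe_le_coe.2 hba) (coe_le_coe.2 hba'))

namespace RDPOn

theorem exists_add_eq (hR : A.RDPOn B) (hu : u ∈ A.lift B) (hv₁ : v₁ ∈ A.lift B)
    (hv₂ : v₂ ∈ A.lift B) (hle : u ≤ v₁ + v₂) (hne : v₁ + v₂ ≠ ⊤) :
    ∃ u₁ ∈ A.lift B, ∃ u₂ ∈ A.lift B, u₁ ≤ v₁ ∧ u₂ ≤ v₂ ∧ u₁ + u₂ = u :=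
  rdpOn_iff.1 hR u v₁ v₂ hu hv₁ hv₂ hle hne

theorem le_of_le_add_of_disjointIn (hR : A.RDPOn B) (hu : u ∈ A.lift B) (hv₁ : v₁ ∈ A.lift B)
    (hv₂ : v₂ ∈ A.lift B) (hle : u ≤ v₁ + v₂) (hne : v₁ + v₂ ≠ ⊤)
    (hdisj : DisjointIn (A.lift B) u v₂) : u ≤ v₁ := by
  obtain ⟨u₁, -, u₂, hu₂, hle₁, hle₂, rfl⟩ := hR.exists_add_eq hu hv₁ hv₂ hle hne
  rwa [hdisj u₂ hu₂ le_add_self hle₂, add_zero]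

theorem disjointIn_add (hR : A.RDPOn B) (hx : x ∈ A.lift B) (hy : y ∈ A.lift B) (hne : x + y ≠ ⊤)
    (hxz : DisjointIn (A.lift B) x z) (hyz : DisjointIn (A.lift B) y z) :
    DisjointIn (A.lift B) (x + y) z := by
  intro t ht htxy htz
  have hty : DisjointIn (A.lift B) t y := hyz.symm.mono htz le_rfl
  exact hxz t ht (hR.le_of_le_add_of_disjointIn ht hx hy htxy hne hty) htz

theorem isSubEA_sharpIn (hR : A.RDPOn B) (hB : A.IsSubEA B) : A.IsSubEA {a | A.SharpIn B a} := by
  refine isSubEA_iff.2 ⟨?_, fun b d hb hbd => ?_⟩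
  · refine (mem_lift_sharpIn_iff (add_zero 1)).2 ⟨hB.one_mem, fun t _ _ ht => ?_⟩
    exact nonpos_iff_eq_zero.1 ht
  · obtain ⟨c, hc⟩ := exists_add_eq_one (ne_top_of_mem_lift hbd)
    have hdbc : d + (b + c) = 1 := by rw [← hc]; abel
    obtain ⟨hbB, hb⟩ := (mem_lift_sharpIn_iff (y := d + c) (by rwa [← add_assoc])).1 hb
    obtain ⟨hbdB, hbd⟩ := (mem_lift_sharpIn_iff hc).1 hbd
    refine (mem_lift_sharpIn_iff hdbc).2 ⟨hB.right_mem hbB hbdB, ?_⟩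
    exact (hR.disjointIn_add hbB (hB.compl_mem hbdB hc) (right_ne_top (hdbc ▸ one_ne_top))
      (hb.mono le_rfl le_self_add) (hbd.symm.mono le_rfl le_add_self)).symm

/-- Cutting a sharp `u` along a sharp `v₁` and its complement gives a sharp piece below `v₁`, and
the other piece, being disjoint from `v₁`, lies below `v₂` as soon as `u ≤ v₁ + v₂`. -/
theorem rdpOn_sharpIn (hR : A.RDPOn B) (hB : A.IsSubEA B) : A.RDPOn {a | A.SharpIn B a} := by
  refine rdpOn_iff.2 fun u v₁ v₂ hu hv₁ hv₂ hle hne => ?_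
  obtain ⟨u', hu'⟩ := exists_add_eq_one (ne_top_of_mem_lift hu)
  obtain ⟨v', hv'⟩ := exists_add_eq_one (ne_top_of_mem_lift hv₁)
  have hsharp := hu
  obtain ⟨huB, hu⟩ := (mem_lift_sharpIn_iff hu').1 hu
  obtain ⟨hv₁B, hv₁⟩ := (mem_lift_sharpIn_iff hv').1 hv₁
  have hv₂B : v₂ ∈ A.lift B := lift_mono (fun _ h => h.1) hv₂
  obtain ⟨u₁, hu₁B, u₂, hu₂B, hle₁, hle₂, rfl⟩ :=
    hR.exists_add_eq huB hv₁B (hB.compl_mem hv₁B hv') (hv' ▸ le_one (ne_top_of_mem_lift huB))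
      (hv' ▸ one_ne_top)
  rw [add_assoc] at hu'
  have hu₁ : u₁ ∈ A.lift {a | A.SharpIn B a} := by
    refine (mem_lift_sharpIn_iff hu').2 ⟨hu₁B, ?_⟩
    exact (hR.disjointIn_add hu₂B (hB.compl_mem huB (by rwa [add_assoc]))
      (right_ne_top (hu' ▸ one_ne_top)) (hv₁.mono hle₁ hle₂).symm
      (hu.symm.mono le_rfl le_self_add)).symm
  refine ⟨u₁, hu₁, u₂, (hR.isSubEA_sharpIn hB).right_mem hu₁ hsharp, hle₁, ?_, rfl⟩
  exact hR.le_of_le_add_of_disjointIn hu₂B hv₂B hv₁B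
    (le_add_self.trans (hle.trans_eq (add_comm v₁ v₂))) (by rwa [add_comm])
    (hv₁.symm.mono hle₂ le_rfl)

end RDPOn

theorem CentralIn.sharpIn {a : E} (hB : A.IsSubEA B) (ha : A.CentralIn B a) : A.SharpIn B a := by
  refine ⟨ha.1.1, fun x hx hxa hxa' => ?_⟩
  have zero_mem : A.zero ∈ B := coe_mem_lift.1 hB.zero_mem
  have zero_le (c : E) : A.le A.zero c := ⟨c, by rw [A.comm, oplus_zero]⟩
  have := (ha.2 x hx).unique (y₁ := (x, A.zero)) (y₂ := (A.zero, x))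
    ⟨hx, zero_mem, hxa, zero_le _, oplus_zero x⟩
    ⟨zero_mem, hx, zero_le _, hxa', by rw [A.comm, oplus_zero]⟩
  exact congrArg Prod.fst this

namespace RDPOn

variable {a : E}

theorem principalIn_of_sharpIn (hR : A.RDPOn B) (hB : A.IsSubEA B) (ha : A.SharpIn B a) :
    A.PrincipalIn B a := by
  refine ⟨ha.1, fun x hx y hy s hxa hya hs => coe_le_coe.1 ?_⟩
  obtain ⟨haB, hdisj⟩ := (mem_lift_sharpIn_iff (coe_add_compl a)).1 (coe_mem_lift.2 ha)
  rw [← coe_mem_lift (A := A)] at hx hy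
  have hs : (x + y : A.Total) = s := coe_add_coe.2 hs
  have hne : (x + y : A.Total) ≠ ⊤ := hs ▸ coe_ne_top s
  have hsa : DisjointIn (A.lift B) (x + y) (A.compl a) :=
    hR.disjointIn_add hx hy hne (hdisj.mono (coe_le_coe.2 hxa) le_rfl)
      (hdisj.mono (coe_le_coe.2 hya) le_rfl)
  rw [← hs]
  exact hR.le_of_le_add_of_disjointIn (hB.add_mem hx hy hne) haB
    (hB.compl_mem haB (coe_add_compl a)) (coe_add_compl a ▸ le_one hne)
    (coe_add_compl a ▸ one_ne_top) hsa

theorem fst_eq_of_sharpIn {b₁ b₂ c₁ c₂ : A.Total} (hR : A.RDPOn B) (ha : A.SharpIn B a)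
    (hb₁ : b₁ ∈ A.lift B) (hb₂ : b₂ ∈ A.lift B) (hc₁ : c₁ ∈ A.lift B) (hc₂ : c₂ ∈ A.lift B)
    (hb₁a : b₁ ≤ a) (hb₂a : b₂ ≤ A.compl a) (hc₁a : c₁ ≤ a) (hc₂a : c₂ ≤ A.compl a)
    (h : b₁ + b₂ = c₁ + c₂) (hne : b₁ + b₂ ≠ ⊤) : b₁ = c₁ := by
  obtain ⟨-, hdisj⟩ := (mem_lift_sharpIn_iff (coe_add_compl a)).1 (coe_mem_lift.2 ha)
  apply le_antisymm
  · exact hR.le_of_le_add_of_disjointIn hb₁ hc₁ hc₂ (h ▸ le_self_add) (h ▸ hne)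
      (hdisj.mono hb₁a hc₂a)
  · exact hR.le_of_le_add_of_disjointIn hc₁ hb₁ hb₂ (h ▸ le_self_add) hne (hdisj.mono hc₁a hb₂a)

theorem centralIn_of_sharpIn (hR : A.RDPOn B) (hB : A.IsSubEA B) (ha : A.SharpIn B a) :
    A.CentralIn B a := by
  refine ⟨hR.principalIn_of_sharpIn hB ha, fun b hb => ?_⟩
  have hbB : (b : A.Total) ∈ A.lift B := coe_mem_lift.2 hb
  have haB : (a : A.Total) ∈ A.lift B := coe_mem_lift.2 ha.1
  obtain ⟨_, ⟨b₁, hb₁, rfl⟩, _, ⟨b₂, hb₂, rfl⟩, hb₁a, hb₂a, hsum⟩ :=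
    hR.exists_add_eq hbB haB (hB.compl_mem haB (coe_add_compl a))
      (coe_add_compl a ▸ le_one (coe_ne_top b)) (coe_add_compl a ▸ one_ne_top)
  refine ⟨(b₁, b₂), ⟨hb₁, hb₂, coe_le_coe.1 hb₁a, coe_le_coe.1 hb₂a, coe_add_coe.1 hsum⟩, ?_⟩
  rintro ⟨c₁, c₂⟩ ⟨hc₁, hc₂, hc₁a, hc₂a, hc⟩
  have hc : (c₁ + c₂ : A.Total) = b := coe_add_coe.2 hc
  have hne : (c₁ + c₂ : A.Total) ≠ ⊤ := hc ▸ coe_ne_top b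
  have hfst : (c₁ : A.Total) = b₁ :=
    hR.fst_eq_of_sharpIn ha (coe_mem_lift.2 hc₁) (coe_mem_lift.2 hc₂) (coe_mem_lift.2 hb₁)
      (coe_mem_lift.2 hb₂) (coe_le_coe.2 hc₁a) (coe_le_coe.2 hc₂a) hb₁a hb₂a (hc.trans hsum.symm)
      hne
  have hsnd : (c₂ : A.Total) = b₂ :=
    add_left_cancel (x := c₁) (by rw [hc, hfst, hsum]) hne
  exact Prod.ext (coe_inj.1 hfst) (coe_inj.1 hsnd)

theorem centralIn_iff_sharpIn (hR : A.RDPOn B) (hB : A.IsSubEA B) :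
    A.CentralIn B a ↔ A.SharpIn B a :=
  ⟨fun h => h.sharpIn hB, hR.centralIn_of_sharpIn hB⟩

end RDPOn

/-! ### Splitting orthogonal families -/

theorem Splits.le_sum {X : Set A.Total} {W : Multiset A.Total} (h : Splits X x W) : x ≤ W.sum := by
  obtain ⟨P, Q, hPQ, rfl⟩ := h.exists_refinesIn
  rw [← hPQ.sum_eq, Multiset.sum_add]
  exact le_self_add

theorem Splits.mem {W : Multiset A.Total} (h : Splits (A.lift B) x W) (hB : A.IsSubEA B)
    (hne : W.sum ≠ ⊤) : x ∈ A.lift B := by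
  have hxne : x ≠ ⊤ := ne_top_of_le_ne_top hne h.le_sum
  obtain ⟨P, Q, hPQ, rfl⟩ := h.exists_refinesIn
  exact hB.multiset_sum_mem (fun c hc => hPQ.mem c (Multiset.mem_add.2 (.inl hc))) hxne

theorem Splits.exists_refinesIn_of_le {X : Set A.Total} {W C : Multiset A.Total}
    (h : Splits X x W) (hsum : W.sum = x + y) (hWC : W ≤ C) (hC : ∀ c ∈ C, c ∈ X)
    (hne : C.sum ≠ ⊤) :
    ∃ D P Q : Multiset A.Total, RefinesIn X D C ∧ P + Q ≤ D ∧ P.sum = x ∧ Q.sum = y := by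
  obtain ⟨V, rfl⟩ := Multiset.le_iff_exists_add.1 hWC
  obtain ⟨P, Q, hPQ, rfl⟩ := h.exists_refinesIn
  have hV : RefinesIn X V V := .refl fun c hc => hC c (Multiset.mem_add.2 (.inr hc))
  have hadd : P.sum + Q.sum = P.sum + y := by rw [← Multiset.sum_add, hPQ.sum_eq, hsum]
  refine ⟨P + Q + V, P, Q, hPQ.add hV, Multiset.le_add_right _ _, rfl, add_left_cancel hadd ?_⟩
  rw [hadd, ← hsum]
  exact left_ne_top (Multiset.sum_add W V ▸ hne)

theorem RDPOn.splits (hR : A.RDPOn B) (hB : A.IsSubEA B) {W : Multiset A.Total}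
    (hW : ∀ c ∈ W, c ∈ A.lift B) (hx : x ∈ A.lift B) (hle : x ≤ W.sum) (hne : W.sum ≠ ⊤) :
    Splits (A.lift B) x W := by
  induction W using Multiset.induction_on generalizing x with
  | empty => exact nonpos_iff_eq_zero.1 hle ▸ .zero _
  | cons c W ih =>
    rw [Multiset.forall_mem_cons] at hW
    rw [Multiset.sum_cons] at hle hne
    have hWsum := hB.multiset_sum_mem hW.2 (right_ne_top hne)
    obtain ⟨p, hp, x', hx', ⟨q, rfl⟩, hle', rfl⟩ := hR.exists_add_eq hx hW.1 hWsum hle hne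
    exact (ih hW.2 hx' hle' (right_ne_top hne)).cons hp (hB.right_mem hp hW.1)

theorem mem_lift_closureStep_iff : z ∈ A.lift (A.closureStep M) ↔
    ∃ x y, x + y ∈ A.lift M ∧ x + y + x ≠ ⊤ ∧ (z = x ∨ z = y) := by
  constructor
  · rintro ⟨c, ⟨b, hb, hcb, hcb'⟩ | ⟨b, hb, a, -, hab', hc⟩, rfl⟩
    · refine ⟨c, A.ominus b c, ?_, ?_, .inl rfl⟩ <;> rw [coe_add_ominus hcb]
      exacts [coe_mem_lift.2 hb, le_compl_iff.1 (coe_le_coe.2 hcb')]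
    · refine ⟨a, c, ?_, ?_, .inr rfl⟩ <;> rw [coe_add_coe.2 hc]
      exacts [coe_mem_lift.2 hb, le_compl_iff.1 (coe_le_coe.2 hab')]
  · rintro ⟨x, y, ⟨b, hb, hxy⟩, hne, hz⟩
    obtain ⟨a, rfl⟩ := ne_top_iff.1 (right_ne_top hne)
    obtain ⟨c, rfl⟩ := ne_top_iff.1 (right_ne_top (left_ne_top hne))
    rw [← hxy] at hne
    have hab : A.le a b := ⟨c, coe_add_coe.1 hxy.symm⟩
    have hab' : A.le a (A.compl b) := coe_le_coe.1 (le_compl_iff.2 hne)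
    rcases hz with rfl | rfl
    · exact coe_mem_lift.2 (.inl ⟨b, hb, hab, hab'⟩)
    · exact coe_mem_lift.2 (.inr ⟨b, hb, a, hab, hab', coe_add_coe.1 hxy.symm⟩)

theorem left_mem_of_closureStep_subset (hX : A.closureStep X ⊆ X) (hxy : x + y ∈ A.lift X)
    (hne : x + y + x ≠ ⊤) : x ∈ A.lift X :=
  lift_mono hX (mem_lift_closureStep_iff.2 ⟨x, y, hxy, hne, .inl rfl⟩)

theorem right_mem_of_closureStep_subset (hX : A.closureStep X ⊆ X) (hxy : x + y ∈ A.lift X)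
    (hne : x + y + x ≠ ⊤) : y ∈ A.lift X :=
  lift_mono hX (mem_lift_closureStep_iff.2 ⟨x, y, hxy, hne, .inr rfl⟩)

theorem zero_mem_of_closureStep_subset (hX : A.closureStep X ⊆ X) (h1 : 1 ∈ A.lift X) :
    0 ∈ A.lift X :=
  left_mem_of_closureStep_subset hX (y := 1) (by rwa [zero_add])
    (by rw [zero_add, add_zero]; exact one_ne_top)

namespace Homogeneous

variable {C S W : Multiset A.Total}

theorem splits (hA : A.Homogeneous) (hX : A.closureStep X ⊆ X) (hW : ∀ c ∈ W, c ∈ A.lift X)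
    (hle : x ≤ W.sum) (hne : W.sum + x ≠ ⊤) : Splits (A.lift X) x W := by
  induction W using Multiset.induction_on generalizing x with
  | empty => exact nonpos_iff_eq_zero.1 hle ▸ .zero _
  | cons c W ih =>
    rw [Multiset.forall_mem_cons] at hW
    rw [Multiset.sum_cons] at hle hne
    obtain ⟨p, ⟨q, rfl⟩, x', hle', rfl⟩ := hA.exists_add_eq hle hne
    rw [add_add_add_comm] at hne
    exact (ih hW.2 hle' (right_ne_top hne)).cons
      (left_mem_of_closureStep_subset hX hW.1 (left_ne_top hne))
      (right_mem_of_closureStep_subset hX hW.1 (left_ne_top hne))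

/-- The common part `S ∩ W` cancels, and the two remaining families `S - W` and `W - S` are
orthogonal to each other, which is what homogeneity needs. -/
theorem splits_sum_of_le (hA : A.Homogeneous) (hX : A.closureStep X ⊆ X) (h0 : 0 ∈ A.lift X)
    (hC : ∀ c ∈ C, c ∈ A.lift X) (hne : C.sum ≠ ⊤) (hS : S ≤ C) (hW : W ≤ C)
    (hle : S.sum ≤ W.sum) : Splits (A.lift X) S.sum W := by
  classical
  have hS_eq : S ∩ W + (S - W) = S := by rw [add_comm, Multiset.sub_add_inter]
  have hW_eq : S ∩ W + (W - S) = W := by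
    rw [add_comm, Multiset.inter_comm, Multiset.sub_add_inter]
  have hWX : ∀ c ∈ W, c ∈ A.lift X := fun c hc => hC c (Multiset.mem_of_le hW hc)
  have hunion : (S - W).sum + ((S ∩ W).sum + (W - S).sum) ≠ ⊤ := by
    obtain ⟨V, hV⟩ := Multiset.le_iff_exists_add.1 (Multiset.union_le hS hW)
    rw [← Multiset.sum_add, hW_eq, ← Multiset.sum_add]
    exact left_ne_top (y := V.sum) (by rwa [← Multiset.sum_add, ← Multiset.union_def, ← hV])
  have hcancel : (S - W).sum ≤ (W - S).sum := by
    refine le_of_add_le_add_left ?_ (right_ne_top hunion)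
    rwa [← Multiset.sum_add, ← Multiset.sum_add, hS_eq, hW_eq]
  have horth : (W - S).sum + (S - W).sum ≠ ⊤ := by
    rw [add_left_comm, add_comm (S - W).sum] at hunion
    exact right_ne_top hunion
  have hsplit : Splits (A.lift X) ((S ∩ W).sum + (S - W).sum) (S ∩ W + (W - S)) :=
    (Splits.sum_self h0 fun c hc => hWX c (Multiset.mem_of_le Multiset.inter_le_right hc)).add
      (hA.splits hX (fun c hc => hWX c (Multiset.mem_of_le (Multiset.sub_le_self W S) hc)) hcancel
        horth)
  rwa [← Multiset.sum_add, hS_eq, hW_eq] at hsplit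

theorem exists_refinesIn_of_add_mem_subsums (hA : A.Homogeneous) (hX : A.closureStep X ⊆ X)
    (h0 : 0 ∈ A.lift X) (hC : ∀ c ∈ C, c ∈ A.lift X) (hne : C.sum ≠ ⊤) (hx : x ∈ subsums C)
    (hxy : x + y ∈ subsums C) :
    ∃ D P Q : Multiset A.Total, RefinesIn (A.lift X) D C ∧ P + Q ≤ D ∧ P.sum = x ∧ Q.sum = y := by
  obtain ⟨S, hS, rfl⟩ := hx
  obtain ⟨W, hW, hsum⟩ := hxy
  exact (hA.splits_sum_of_le hX h0 hC hne hS hW (hsum ▸ le_self_add)).exists_refinesIn_of_le hsum hW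
    hC hne

end Homogeneous

/-! ### Internally compatible sets -/

/-- `C` is an orthogonal cover of `F` with range in `X`: the version of `IsCoverOf` for unordered
families in the totalization. -/
structure IsCover (X : Set E) (C : Multiset A.Total) (F : Set A.Total) : Prop where
  mem : ∀ c ∈ C, c ∈ A.lift X
  sum_ne_top : C.sum ≠ ⊤
  subset_subsums : F ⊆ subsums C

namespace IsCover

variable {C D : Multiset A.Total} {F F' : Set A.Total}

theorem mono (h : IsCover M C F) (hMN : M ⊆ N) (hF : F' ⊆ F) : IsCover N C F' :=
  ⟨fun c hc => lift_mono hMN (h.mem c hc), h.sum_ne_top, hF.trans h.subset_subsums⟩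

theorem of_refinesIn (h : IsCover X C F) (hD : RefinesIn (A.lift X) D C) : IsCover X D F :=
  ⟨hD.mem, hD.sum_eq ▸ h.sum_ne_top, h.subset_subsums.trans hD.subsums_subset⟩

end IsCover

variable (A) in
/-- The version of `InternallyCompatible` for unordered families in the totalization: every finite
subset of `M` has an orthogonal cover with range in `M`. -/
def InternallyCovered (M : Set E) : Prop :=
  ∀ F : Set A.Total, F.Finite → F ⊆ A.lift M → ∃ C, IsCover M C F

theorem RDPOn.internallyCovered (hR : A.RDPOn B) (hB : A.IsSubEA B) : A.InternallyCovered B := by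
  intro F hfin hF
  have hone : ∀ c ∈ ({1} : Multiset A.Total), c ∈ A.lift B := by simp [hB.one_mem]
  obtain ⟨D, hD, hFD⟩ := RefinesIn.exists_of_finite hfin hone fun x hx D hD => by
    have hsum : D.sum = 1 := by rw [hD.sum_eq, Multiset.sum_singleton]
    have hne : D.sum ≠ ⊤ := hsum ▸ one_ne_top
    obtain ⟨y, hy⟩ := exists_add_eq_one (ne_top_of_mem_lift (hF hx))
    have hsplit : Splits (A.lift B) x D := hR.splits hB hD.mem (hF hx) (hsum ▸ ⟨y, hy⟩) hne
    obtain ⟨D', P, Q, hD', hPQ, hP, -⟩ :=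
      hsplit.exists_refinesIn_of_le (hsum.trans hy.symm) le_rfl hD.mem hne
    exact ⟨D', hD', P, (Multiset.le_add_right P Q).trans hPQ, hP⟩
  exact ⟨D, hD.mem, by simp [hD.sum_eq, one_ne_top], hFD⟩

theorem internallyCovered_iUnion {ι : Type*} [Nonempty ι] {s : ι → Set E}
    (hdir : Directed (· ⊆ ·) s)
    (h : ∀ i, ∀ F : Set A.Total, F.Finite → F ⊆ A.lift (s i) → ∃ C, IsCover (⋃ i, s i) C F) :
    A.InternallyCovered (⋃ i, s i) := by
  intro F hfin hF
  have hdir' : Directed (· ⊆ ·) fun i => A.lift (s i) := hdir.mono_comp _ fun _ _ => lift_mono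
  lift F to Finset A.Total using hfin
  rw [lift, Set.image_iUnion] at hF
  obtain ⟨i, hi⟩ := hdir'.exists_mem_subset_of_finset_subset_biUnion hF
  exact h i F F.finite_toSet hi

theorem closureSeq_succ (M : Set E) (n : ℕ) :
    A.closureSeq M (n + 1) = A.closureStep (A.closureSeq M n) :=
  Function.iterate_succ_apply' _ _ _

theorem subset_closureStep (M : Set E) : M ⊆ A.closureStep M := fun a ha =>
  coe_mem_lift.1 <| mem_lift_closureStep_iff.2
    ⟨0, a, by rw [zero_add]; exact coe_mem_lift.2 ha, by simpa using coe_ne_top a, .inr rfl⟩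

theorem monotone_closureSeq (M : Set E) : Monotone (A.closureSeq M) :=
  monotone_nat_of_le_succ fun n => closureSeq_succ M n ▸ subset_closureStep _

theorem closureSeq_subset_closure (M : Set E) (n : ℕ) : A.closureSeq M n ⊆ A.closure M :=
  Set.subset_iUnion _ n

theorem closureStep_closure_subset (M : Set E) : A.closureStep (A.closure M) ⊆ A.closure M := by
  rintro c (⟨b, hb, h⟩ | ⟨b, hb, h⟩) <;>
    obtain ⟨n, hn⟩ := Set.mem_iUnion.1 hb <;>
    refine closureSeq_subset_closure M (n + 1) ?_ <;>
    rw [closureSeq_succ]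
  · exact .inl ⟨b, hn, h⟩
  · exact .inr ⟨b, hn, h⟩

theorem Homogeneous.exists_isCover_of_closureStep (hA : A.Homogeneous) (hX : A.closureStep X ⊆ X)
    (hM : ∀ F : Set A.Total, F.Finite → F ⊆ A.lift M → ∃ C, IsCover X C F) {F : Set A.Total}
    (hfin : F.Finite) (hF : F ⊆ A.lift (A.closureStep M)) : ∃ C, IsCover X C F := by
  have hparts : ∀ z ∈ F, ∃ x y, x + y ∈ A.lift M ∧ x + y + x ≠ ⊤ ∧ (z = x ∨ z = y) :=
    fun z hz => mem_lift_closureStep_iff.1 (hF hz)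
  choose! p q hpq hne hz using hparts
  obtain ⟨C, hC⟩ := hM ((fun z => p z + q z) '' F) (hfin.image _) (Set.image_subset_iff.2 hpq)
  obtain ⟨D, hD, hFD⟩ := RefinesIn.exists_of_finite hfin hC.mem fun z hzF D hD => by
    have hDcover := hC.of_refinesIn hD
    obtain ⟨W, hW, hsum⟩ := hDcover.subset_subsums (Set.mem_image_of_mem _ hzF)
    have hsplit : Splits (A.lift X) (p z) W :=
      hA.splits hX (fun c hc => hD.mem c (Multiset.mem_of_le hW hc)) (hsum ▸ le_self_add)
        (hsum ▸ hne z hzF)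
    obtain ⟨D', P, Q, hD', hPQ, hP, hQ⟩ :=
      hsplit.exists_refinesIn_of_le hsum hW hD.mem hDcover.sum_ne_top
    refine ⟨D', hD', ?_⟩
    rcases hz z hzF with hz | hz <;> rw [hz]
    · exact ⟨P, (Multiset.le_add_right P Q).trans hPQ, hP⟩
    · exact ⟨Q, (Multiset.le_add_left Q P).trans hPQ, hQ⟩
  exact ⟨D, hD.mem, hD.sum_eq ▸ hC.sum_ne_top, hFD⟩

theorem InternallyCovered.closure (hM : A.InternallyCovered M) (hA : A.Homogeneous) :
    A.InternallyCovered (A.closure M) := by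
  refine internallyCovered_iUnion (monotone_closureSeq M).directed_le fun n => ?_
  induction n with
  | zero =>
    intro F hfin hF
    obtain ⟨C, hC⟩ := hM F hfin hF
    exact ⟨C, hC.mono (closureSeq_subset_closure M 0) subset_rfl⟩
  | succ n ih =>
    intro F hfin hF
    rw [closureSeq_succ] at hF
    exact hA.exists_isCover_of_closureStep (closureStep_closure_subset M) ih hfin hF

theorem InternallyCovered.exists_maximal_superset (hM : A.InternallyCovered M) :
    ∃ N, M ⊆ N ∧ Maximal A.InternallyCovered N := by
  refine zorn_subset_nonempty {N | A.InternallyCovered N} (fun c hc hchain hne => ?_) M hM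
  refine ⟨⋃₀ c, ?_, fun _ => Set.subset_sUnion_of_mem⟩
  have := hne.to_subtype
  rw [Set.sUnion_eq_iUnion]
  refine internallyCovered_iUnion hchain.directedOn.directed_val fun i F hfin hF => ?_
  obtain ⟨C, hC⟩ := hc i.2 F hfin hF
  exact ⟨C, hC.mono (Set.subset_iUnion _ i) subset_rfl⟩

/-! ### Maximal internally compatible sets -/

theorem closureStep_subset_of_maximal (hN : Maximal A.InternallyCovered N) (hA : A.Homogeneous) :
    A.closureStep N ⊆ N :=
  (closureSeq_subset_closure N 1).trans <|
    hN.le_of_ge (hN.prop.closure hA) (closureSeq_subset_closure N 0)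

theorem mem_lift_of_maximal (hN : Maximal A.InternallyCovered N) (hx : x ≠ ⊤)
    (h : ∀ F : Set A.Total, F.Finite → F ⊆ A.lift N → ∃ C, IsCover N C (insert x F)) :
    x ∈ A.lift N := by
  obtain ⟨d, rfl⟩ := ne_top_iff.1 hx
  suffices hins : A.InternallyCovered (insert d N) from
    coe_mem_lift.2 (hN.le_of_ge hins (Set.subset_insert d N) (Set.mem_insert d N))
  intro F hfin hF
  have hdiff : F \ {(d : A.Total)} ⊆ A.lift N := by
    rwa [Set.sdiff_singleton_subset_iff, lift, ← Set.image_insert_eq]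
  obtain ⟨C, hC⟩ := h (F \ {(d : A.Total)}) hfin.sdiff hdiff
  exact ⟨C, hC.mono (Set.subset_insert d N) (Set.sdiff_singleton_subset_iff.1 subset_rfl)⟩

theorem isSubEA_of_maximal (hN : Maximal A.InternallyCovered N) (hA : A.Homogeneous)
    (h1 : 1 ∈ A.lift N) : A.IsSubEA N := by
  have hcl : A.closureStep N ⊆ N := closureStep_subset_of_maximal hN hA
  refine isSubEA_iff.2 ⟨h1, fun x y hx hxy => ?_⟩
  refine mem_lift_of_maximal hN (right_ne_top (ne_top_of_mem_lift hxy)) fun F hfin hF => ?_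
  obtain ⟨C, hC⟩ := hN.prop (insert x (insert (x + y) F)) ((hfin.insert _).insert _)
    (Set.insert_subset hx (Set.insert_subset hxy hF))
  obtain ⟨hxC, hC'⟩ := Set.insert_subset_iff.1 hC.subset_subsums
  obtain ⟨hxyC, hFC⟩ := Set.insert_subset_iff.1 hC'
  obtain ⟨D, P, Q, hD, hPQ, -, hQ⟩ := hA.exists_refinesIn_of_add_mem_subsums hcl
    (zero_mem_of_closureStep_subset hcl h1) hC.mem hC.sum_ne_top hxC hxyC
  exact ⟨D, hD.mem, hD.sum_eq ▸ hC.sum_ne_top,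
    Set.insert_subset ⟨Q, (Multiset.le_add_left Q P).trans hPQ, hQ⟩ (hFC.trans hD.subsums_subset)⟩

theorem rdpOn_of_maximal (hN : Maximal A.InternallyCovered N) (hA : A.Homogeneous)
    (h1 : 1 ∈ A.lift N) : A.RDPOn N := by
  have hcl : A.closureStep N ⊆ N := closureStep_subset_of_maximal hN hA
  have hsub : A.IsSubEA N := isSubEA_of_maximal hN hA h1
  refine rdpOn_iff.2 fun u v₁ v₂ hu hv₁ hv₂ hle hne => ?_
  obtain ⟨C, hC⟩ := hN.prop {u, v₁, v₁ + v₂} (Set.toFinite _) <| Set.insert_subset hu <|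
    Set.insert_subset hv₁ <| Set.singleton_subset_iff.2 <| hsub.add_mem hv₁ hv₂ hne
  have hv₁C : v₁ ∈ subsums C := hC.subset_subsums (by simp)
  have hvC : v₁ + v₂ ∈ subsums C := hC.subset_subsums (by simp)
  obtain ⟨D, P, Q, hD, hPQ, rfl, rfl⟩ := hA.exists_refinesIn_of_add_mem_subsums hcl hsub.zero_mem
    hC.mem hC.sum_ne_top hv₁C hvC
  obtain ⟨U, hU, rfl⟩ := (hC.of_refinesIn hD).subset_subsums (Set.mem_insert u _)
  have hsplit : Splits (A.lift N) U.sum (P + Q) :=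
    hA.splits_sum_of_le hcl hsub.zero_mem hD.mem (hD.sum_eq ▸ hC.sum_ne_top) hU hPQ
      (by rwa [Multiset.sum_add])
  obtain ⟨u₁, u₂, hu₁, hu₂, hadd⟩ := hsplit.of_add
  exact ⟨u₁, hu₁.mem hsub (left_ne_top hne), u₂, hu₂.mem hsub (right_ne_top hne), hu₁.le_sum,
    hu₂.le_sum, hadd⟩

theorem IsBlock.closureStep_subset (hB : A.IsBlock B) (hA : A.Homogeneous) :
    A.closureStep B ⊆ B := by
  obtain ⟨hsub, hR, hmax⟩ := hB
  obtain ⟨N, hBN, hN⟩ := (hR.internallyCovered hsub).exists_maximal_superset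
  have h1 : 1 ∈ A.lift N := lift_mono hBN hsub.one_mem
  rw [← hmax N (isSubEA_of_maximal hN hA h1) (rdpOn_of_maximal hN hA h1) hBN]
  exact closureStep_subset_of_maximal hN hA

theorem IsBlock.sharp_of_sharpIn {a : E} (hB : A.IsBlock B) (hA : A.Homogeneous)
    (ha : A.SharpIn B a) : A.Sharp a := fun b hba hba' =>
  ha.2 b (hB.closureStep_subset hA (.inl ⟨a, ha.1, hba, hba'⟩)) hba hba'

end EffectAlgebra

/-- For every block `B⁰` of the orthoalgebra of sharp elements
and every block `B` of `E` with `B⁰ ⊆ B`, `B⁰` is the center of `B`. -/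
theorem sharp_block_is_center {E : Type*} (A : EffectAlgebra E)
    (hH : A.Homogeneous) (B0 B : Set E)
    (hB0 : A.IsBlockIn {a | A.Sharp a} B0) (hB : A.IsBlock B)
    (hsub : B0 ⊆ B) :
    B0 = {a | A.CentralIn B a} := by
  have hcenter : {a | A.CentralIn B a} = {a | A.SharpIn B a} :=
    Set.ext fun a => hB.2.1.centralIn_iff_sharpIn hB.1
  have hsharp : {a | A.SharpIn B a} ⊆ {a | A.Sharp a} := fun a => hB.sharp_of_sharpIn hH
  have hB0_sub : B0 ⊆ {a | A.SharpIn B a} :=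
    fun a ha => ⟨hsub ha, fun b _ => hB0.1 ha b⟩
  obtain ⟨-, -, -, hmax⟩ := hB0
  rw [hcenter]
  exact (hmax _ hsharp (hB.2.1.isSubEA_sharpIn hB.1) (hB.2.1.rdpOn_sharpIn hB.1) hB0_sub).symm
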